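/- arXiv:1102.2127 — 2 statements merged into one kernel-verified Lean document; each statement's English description precedes it below -/
import Mathlib

section
/- Let G be an idempotent groupoid and n ≥ 3 such that ⟨x₁⋯xₙ⟩_L = ⟨x₁⋯xₙ⟩_R holds for all x₁,…,xₙ ∈ G. Then right multiplications in G are idempotent: (x*y)*y = x*y for all x, y ∈ G. -/
/-- The left-associated product `((x * l₁) * l₂) * ⋯ * lₘ`. -/
def leftAssoc {G : Type*} (op : G → G → G) (x : G) (l : List G) : G :=
  l.foldl op x

/-- The right-associated product `x * (l₁ * (l₂ * (⋯ * lₘ)))`. -/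
def rightAssoc {G : Type*} (op : G → G → G) : G → List G → G
  | x, [] => x
  | x, y :: l => op x (rightAssoc op y l)

theorem leftAssoc_replicate_self {G : Type*} (op : G → G → G) (idem : ∀ x : G, op x x = x)
    (x : G) (k : ℕ) : (List.replicate k x).foldl op x = x := by
  induction k with
  | zero => rfl
  | succ k ih => rw [List.replicate_succ, List.foldl_cons, idem, ih]

theorem rightAssoc_replicate_self {G : Type*} (op : G → G → G) (idem : ∀ x : G, op x x = x)
    (x : G) (k : ℕ) : rightAssoc op x (List.replicate k x) = x := by
  induction k with
  | zero => rfl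
  | succ k ih => rw [List.replicate_succ, rightAssoc, ih, idem]

theorem rightAssoc_replicate_append {G : Type*} (op : G → G → G)
    (x z : G) (l : List G) (k : ℕ) :
    rightAssoc op x (List.replicate k x ++ z :: l) = (op x)^[k + 1] (rightAssoc op z l) := by
  induction k with
  | zero => rfl
  | succ k ih =>
    rw [List.replicate_succ, List.cons_append, rightAssoc, ih, Function.iterate_succ_apply' _ (k + 1)]

/-- In an idempotent groupoid satisfying `⟨x₁⋯xₙ⟩_L = ⟨x₁⋯xₙ⟩_R` for some `n ≥ 3`,
right multiplications are idempotent: `(x*y)*y = x*y`. -/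
theorem idempotent_leftAssoc_eq_rightAssoc_right_mul_idem
    {G : Type*} (op : G → G → G)
    (idem : ∀ x : G, op x x = x)
    (n : ℕ) (hn : 3 ≤ n)
    (h : ∀ (x : G) (l : List G), l.length = n - 1 →
      leftAssoc op x l = rightAssoc op x l) :
    ∀ x y : G, op (op x y) y = op x y := by
  obtain ⟨k, rfl⟩ : ∃ k, n = k + 3 := ⟨n - 3, by omega⟩
  intro x y
  have w1 := h x (y :: List.replicate (k + 1) y) (by simp)
  have w2 := h x (List.replicate (k + 1) x ++ [y]) (by simp)
  have w3 := h x (List.replicate k x ++ [y, y]) (by simp)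
  have w4 := h x (x :: y :: List.replicate k y) (by simp)
  have w5 := h x (List.replicate k x ++ [op x y, y]) (by simp)
  rw [rightAssoc_replicate_append] at w2 w3 w5
  simp only [leftAssoc, List.foldl_append, leftAssoc_replicate_self op idem, List.foldl_cons,
    List.foldl_nil, rightAssoc, idem, rightAssoc_replicate_self op idem] at w1 w2 w3 w4 w5
  have w1' : op (List.foldl op (op x y) (List.replicate k y)) y = op x y := by
    rw [List.replicate_succ', List.foldl_append] at w1
    exact w1
  have e : (op x)^[k + 1] (op (op x y) y) = op (op x y) y := by
    rw [w3, ← Function.iterate_add_apply, show k + 1 + (k + 1) = k + (k + 1 + 1) by ring,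
      Function.iterate_add_apply, ← w2, ← Function.iterate_succ_apply]
  rw [e, ← w4, w1'] at w5
  exact w5.symm
end

section
/- Let G be a groupoid satisfying the three identities x*x = x, x*(y*z) = x*y, and (x*y)*y = x*y for all x, y, z ∈ G. Then either G is a left zero semigroup (x*y = x for all x, y ∈ G), or for every n ≥ 2 the number of distinct n-ary functions Gⁿ → G induced by bracketings of size n equals exactly 2^(n−2); that is, s_G(n) = 2^(n−2) for all n ≥ 2. -/
/-- A bracketing: a full binary tree. Its leaves, read from left to right,
carry the variables of the bracketed product. -/
inductive Bracketing : Type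
  | leaf : Bracketing
  | node : Bracketing → Bracketing → Bracketing

/-- The size of a bracketing: its number of leaves. -/
def Bracketing.size : Bracketing → ℕ
  | .leaf => 1
  | .node P Q => P.size + Q.size

/-- Evaluate a bracketing in a groupoid `(G, op)` on the variables
`f i, f (i+1), …` (assigned to the leaves from left to right). -/
def Bracketing.eval {G : Type*} (op : G → G → G) : Bracketing → (ℕ → G) → ℕ → G
  | .leaf, f, i => f i
  | .node P Q, f, i => op (P.eval op f i) (Q.eval op f (i + P.size))

/-- Left-normed product of `f 0` with the `f j`, `j ∈ S`, `1 ≤ j ≤ k`. -/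
def lprod {G : Type*} (op : G → G → G) (S : Finset ℕ) (f : ℕ → G) : ℕ → G
  | 0 => f 0
  | k + 1 => if k + 1 ∈ S then op (lprod op S f k) (f (k + 1)) else lprod op S f k

theorem Bracketing.size_positive (B : Bracketing) : 0 < B.size := by
  induction B with
  | leaf => simp [Bracketing.size]
  | node P Q hP hQ => simp only [Bracketing.size]; omega

theorem op_eval {G : Type*} (op : G → G → G)
    (h2 : ∀ x y z : G, op x (op y z) = op x y) (x : G) (B : Bracketing) (f : ℕ → G) (i : ℕ) :
    op x (B.eval op f i) = op x (f i) := by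
  induction B generalizing i with
  | leaf => simp [Bracketing.eval]
  | node P Q hP hQ => simp only [Bracketing.eval]; rw [h2, hP]

theorem lprod_congr {G : Type*} (op : G → G → G) (S T : Finset ℕ) (f : ℕ → G) (k : ℕ)
    (h : ∀ j, 1 ≤ j → j ≤ k → (j ∈ S ↔ j ∈ T)) : lprod op S f k = lprod op T f k := by
  induction k with
  | zero => rfl
  | succ k ih =>
    simp only [lprod]
    rw [ih (fun j h1 h2 => h j h1 (by omega))]
    simp only [h (k + 1) (by omega) le_rfl]

theorem lprod_const {G : Type*} (op : G → G → G) (S : Finset ℕ) (f : ℕ → G) (k d : ℕ)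
    (h : ∀ j ∈ S, j ≤ k) : lprod op S f (k + d) = lprod op S f k := by
  induction d with
  | zero => rfl
  | succ d ih =>
    rw [← add_assoc, lprod, if_neg, ih]
    intro hm
    have := h _ hm
    omega

theorem exists_set {G : Type*} (op : G → G → G)
    (h2 : ∀ x y z : G, op x (op y z) = op x y) (B : Bracketing) :
    ∃ S : Finset ℕ, S ⊆ Finset.Ico 1 B.size ∧ (2 ≤ B.size → 1 ∈ S) ∧
      ∀ f : ℕ → G, B.eval op f 0 = lprod op S f (B.size - 1) := by
  induction B with
  | leaf => exact ⟨∅, by simp, by simp [Bracketing.size], fun f => rfl⟩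
  | node P Q hP hQ =>
    obtain ⟨S, hS, hS1, hSe⟩ := hP
    have hp := P.size_positive
    have hq := Q.size_positive
    refine ⟨insert P.size S, ?_, ?_, ?_⟩
    · intro j hj
      simp only [Bracketing.size, Finset.mem_Ico]
      rcases Finset.mem_insert.1 hj with h | h
      · omega
      · have := Finset.mem_Ico.1 (hS h)
        omega
    · intro _
      by_cases h : P.size = 1
      · simp [h]
      · exact Finset.mem_insert_of_mem (hS1 (by omega))
    · intro f
      have e : (Bracketing.node P Q).size - 1 = P.size + (Q.size - 1) := by
        simp only [Bracketing.size]; omega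
      rw [e, lprod_const]
      · obtain ⟨m, hm⟩ : ∃ m, P.size = m + 1 := ⟨P.size - 1, by omega⟩
        simp only [Bracketing.eval]
        rw [op_eval op h2, hSe, zero_add, hm, lprod, if_pos (Finset.mem_insert_self _ _)]
        congr 1
        apply lprod_congr
        intro j _ hj
        simp only [Finset.mem_insert]
        constructor
        · exact Or.inr
        · rintro (h | h)
          · simp at hj; omega
          · exact h
      · intro j hj
        rcases Finset.mem_insert.1 hj with h | h
        · omega
        · have := Finset.mem_Ico.1 (hS h)
          omega

theorem exists_bracketing {G : Type*} (op : G → G → G)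
    (h2 : ∀ x y z : G, op x (op y z) = op x y) (S : Finset ℕ) (h : 1 ∈ S) (k : ℕ) :
    ∃ B : Bracketing, B.size = k + 1 ∧ ∀ f : ℕ → G, B.eval op f 0 = lprod op S f k := by
  induction k with
  | zero => exact ⟨.leaf, rfl, fun f => rfl⟩
  | succ k ih =>
    obtain ⟨B, hB, hBe⟩ := ih
    by_cases hk : k + 1 ∈ S
    · refine ⟨.node B .leaf, by simp [Bracketing.size, hB], fun f => ?_⟩
      simp [Bracketing.eval, lprod, hk, hBe, hB]
    · cases B with
      | leaf =>
        simp only [Bracketing.size] at hB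
        have : k = 0 := by omega
        subst this
        exact absurd h hk
      | node P Q =>
        refine ⟨.node P (.node Q .leaf), by simp only [Bracketing.size] at *; omega, fun f => ?_⟩
        rw [lprod, if_neg hk, ← hBe]
        simp only [Bracketing.eval]
        rw [h2]

theorem lprod_test {G : Type*} (op : G → G → G) (h1 : ∀ x : G, op x x = x)
    (h2 : ∀ x y z : G, op x (op y z) = op x y) (a b : G) (S : Finset ℕ) (f : ℕ → G) (m n : ℕ)
    (hm : 1 ≤ m) (hf : ∀ i < n, f i = if i = m then b else a) (k : ℕ) (hk : k < n) :
    lprod op S f k = if m ≤ k ∧ m ∈ S then op a b else a := by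
  have hab : op (op a b) a = op a b := by
    rw [← h2 (op a b) a b, h1]
  induction k with
  | zero =>
    rw [lprod, hf 0 hk, if_neg (by omega), if_neg (by omega)]
  | succ k ih =>
    rw [lprod, ih (by omega), hf _ hk]
    by_cases e : k + 1 = m
    · subst e
      simp
    · have : m ≤ k + 1 ↔ m ≤ k := by omega
      simp only [this, if_neg e]
      split_ifs <;> simp [hab, h1]

/-- A groupoid satisfying `x*x = x`, `x*(y*z) = x*y` and `(x*y)*y = x*y` is
either a left zero semigroup or its associative spectrum is exactly
`s_G(n) = 2^(n-2)` for all `n ≥ 2`. -/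
theorem D_cap_A_spectrum
    {G : Type*} (op : G → G → G)
    (h1 : ∀ x : G, op x x = x)
    (h2 : ∀ x y z : G, op x (op y z) = op x y)
    (h3 : ∀ x y : G, op (op x y) y = op x y) :
    (∀ x y : G, op x y = x) ∨
    (∀ n : ℕ, ∀ hn : 2 ≤ n,
      Set.Finite {F : (Fin n → G) → G | ∃ B : Bracketing, B.size = n ∧
        F = fun v => B.eval op (fun i => v ⟨i % n, Nat.mod_lt i (by omega)⟩) 0} ∧
      Set.ncard {F : (Fin n → G) → G | ∃ B : Bracketing, B.size = n ∧
        F = fun v => B.eval op (fun i => v ⟨i % n, Nat.mod_lt i (by omega)⟩) 0} =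
        2 ^ (n - 2)) := by
  by_cases hz : ∀ x y : G, op x y = x
  · exact Or.inl hz
  right
  push Not at hz
  obtain ⟨a, b, hab⟩ := hz
  intro n hn
  set Phi : Finset ℕ → ((Fin n → G) → G) := fun S v =>
    lprod op (insert 1 S) (fun i => v ⟨i % n, Nat.mod_lt i (by omega)⟩) (n - 1) with hPhi
  have key : {F : (Fin n → G) → G | ∃ B : Bracketing, B.size = n ∧
        F = fun v => B.eval op (fun i => v ⟨i % n, Nat.mod_lt i (by omega)⟩) 0} =
      Set.image Phi ((Finset.Ico 2 n).powerset : Set (Finset ℕ)) := by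
    ext F
    constructor
    · rintro ⟨B, hB, rfl⟩
      obtain ⟨S, hS, hS1, hSe⟩ := exists_set op h2 B
      refine ⟨S.erase 1, ?_, ?_⟩
      · rw [Finset.mem_coe, Finset.mem_powerset]
        intro j hj
        have h := Finset.mem_erase.1 hj
        have := Finset.mem_Ico.1 (hS h.2)
        rw [Finset.mem_Ico]
        omega
      · funext v
        simp only [hPhi]
        rw [Finset.insert_erase (hS1 (by omega)), hSe, hB]
    · rintro ⟨S, hS, rfl⟩
      obtain ⟨B, hB, hBe⟩ := exists_bracketing op h2 (insert 1 S) (Finset.mem_insert_self _ _) (n - 1)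
      refine ⟨B, by omega, ?_⟩
      funext v
      simp only [hPhi]
      rw [hBe]
  have inj : Set.InjOn Phi ((Finset.Ico 2 n).powerset : Set (Finset ℕ)) := by
    intro S hS T hT hST
    rw [Finset.mem_coe, Finset.mem_powerset] at hS hT
    have aux : ∀ m, 2 ≤ m → m < n → (m ∈ S ↔ m ∈ T) := by
      intro m hm hmn
      have := congrFun hST (fun i => if i.1 = m then b else a)
      simp only [hPhi] at this
      have hf : ∀ i < n, (if i % n = m then b else a) = if i = m then b else a := by
        intro i hi
        rw [Nat.mod_eq_of_lt hi]
      rw [lprod_test op h1 h2 a b _ _ m n (by omega) hf (n - 1) (by omega),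
        lprod_test op h1 h2 a b _ _ m n (by omega) hf (n - 1) (by omega)] at this
      have e1 : m ≤ n - 1 := by omega
      have e2 : m ≠ 1 := by omega
      simp only [e1, e2, true_and, Finset.mem_insert, false_or] at this
      by_cases p : m ∈ S <;> by_cases q : m ∈ T <;> simp [p, q] at this ⊢
      · exact hab this
      · exact hab this.symm
    ext m
    constructor
    · intro h
      have := Finset.mem_Ico.1 (hS h)
      exact (aux m this.1 this.2).1 h
    · intro h
      have := Finset.mem_Ico.1 (hT h)
      exact (aux m this.1 this.2).2 h
  rw [key]
  refine ⟨(Finset.finite_toSet _).image _, ?_⟩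
  rw [inj.ncard_image, Set.ncard_coe_finset, Finset.card_powerset, Nat.card_Ico]
end
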